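/- arXiv:2004.14953 — 5 statements merged into one kernel-verified Lean document; each statement's English description precedes it below -/
import Mathlib

section
/- Let p_A, p_B, q ∈ (0,1) and μ_A, μ_B > 0 with μ_A + μ_B = 1. Then the strict inequality p_A·(1 − p_B + p_B·q) > p_A·q·(1 + μ_A·(1 − p_A·q)·(1 − p_B)/(μ_A·p_A·q + μ_B·p_B)) holds if and only if μ_B·p_B·(1 − q) > μ_A·(1 − p_A)·q. (This is the key algebraic equivalence in the proof of Proposition 1: the left-hand side of the first inequality is the ex-ante probability of selecting a minority (A) candidate under the myopic rule without search, and the right-hand side is that probability with search, so the displayed condition characterizes exactly when expanding the candidate pool reduces minority hiring.) -/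
/-- Key algebraic equivalence in the proof of Proposition 1: the ex-ante probability of
selecting a minority (A) candidate under the myopic rule without search exceeds that
probability with search iff `μB * pB * (1 - q) > μA * (1 - pA) * q`. -/
theorem stmt_0 (pA pB q μA μB : ℝ)
    (hpA : pA ∈ Set.Ioo (0 : ℝ) 1) (hpB : pB ∈ Set.Ioo (0 : ℝ) 1)
    (hq : q ∈ Set.Ioo (0 : ℝ) 1) (hμA : 0 < μA) (hμB : 0 < μB)
    (hsum : μA + μB = 1) :
    pA * (1 - pB + pB * q) >
      pA * q * (1 + μA * (1 - pA * q) * (1 - pB) / (μA * pA * q + μB * pB)) ↔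
    μB * pB * (1 - q) > μA * (1 - pA) * q := by
  obtain ⟨a0, a1⟩ := hpA
  obtain ⟨b0, b1⟩ := hpB
  obtain ⟨q0, q1⟩ := hq
  have hD : 0 < μA * pA * q + μB * pB := by positivity
  have hc : 0 < pA * (1 - pB) / (μA * pA * q + μB * pB) :=
    div_pos (mul_pos a0 (by linarith)) hD
  have key : pA * (1 - pB + pB * q) -
      pA * q * (1 + μA * (1 - pA * q) * (1 - pB) / (μA * pA * q + μB * pB)) =
      pA * (1 - pB) / (μA * pA * q + μB * pB) *
        (μB * pB * (1 - q) - μA * (1 - pA) * q) := by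
    have hne := hD.ne'
    generalize hE : μA * pA * q + μB * pB = D at *
    field_simp
    rw [← hE]
    ring
  rw [gt_iff_lt, gt_iff_lt, ← sub_pos, key, mul_pos_iff_of_pos_left hc, sub_pos]
end

section
/- The set of parameter tuples (δ, p_A, p_B, v_A, v_B, q, μ_A) ∈ ℝ⁷ satisfying all of the following strict inequalities is a nonempty open subset of ℝ⁷: 0 < δ < 1; 0 < p_B < p_A < 1; v_A > v_B > 0; 0 < q < 1; 1/2 < μ_A < 1; (i) p_A·q·v_A > p_B·v_B; (ii) p_B·v_B > δ·(μ_A·p_A·q·v_A + (1−μ_A)·p_B·v_B); (iii) (1−q)·p_A·q·v_A/((1−q)·p_A + 1 − p_A) < δ·(μ_A·p_A·q·v_A + (1−μ_A)·p_B·v_B); (iv) (1−μ_A)·p_B·(1−q) > μ_A·(1−p_A)·q; and moreover every tuple in this set satisfies p_A·(1 − p_B + p_B·q) > p_A·q·(1 + μ_A·(1−p_A·q)·(1−p_B)/(μ_A·p_A·q + (1−μ_A)·p_B)). In particular, the tuple (0.9, 0.8, 0.7, 1.5, 1, 0.6, 2/3) belongs to this set. (This is the content of Proposition 1: under the myopic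 recruitment rule there exist parameters with minority candidates more valuable, more likely qualified, and more likely found by search, for which improving the search technology strictly reduces the ex-ante probability of selecting a minority candidate.) -/
/-- The conditions of Proposition 1 (myopic rule): parameter restrictions plus
conditions (i)-(iv) from the proof. -/
def GoodParams1 (δ pA pB vA vB q μA : ℝ) : Prop :=
  0 < δ ∧ δ < 1 ∧
  0 < pB ∧ pB < pA ∧ pA < 1 ∧
  vA > vB ∧ vB > 0 ∧
  0 < q ∧ q < 1 ∧
  1 / 2 < μA ∧ μA < 1 ∧
  -- (i) the A-candidate is evaluated first under the myopic rule
  pA * q * vA > pB * vB ∧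
  -- (ii) evaluating a blank-slate B-candidate is myopically preferred to search
  pB * vB > δ * (μA * pA * q * vA + (1 - μA) * pB * vB) ∧
  -- (iii) search is myopically preferred to re-evaluating a once-failed A-candidate
  (1 - q) * pA * q * vA / ((1 - q) * pA + 1 - pA) <
    δ * (μA * pA * q * vA + (1 - μA) * pB * vB) ∧
  -- (iv) condition under which search reduces the probability of selecting an A-candidate
  (1 - μA) * pB * (1 - q) > μA * (1 - pA) * q

/-- The set of parameter tuples satisfying the conditions of Proposition 1. -/
def Params1 : Set (ℝ × ℝ × ℝ × ℝ × ℝ × ℝ × ℝ) :=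
  {x | GoodParams1 x.1 x.2.1 x.2.2.1 x.2.2.2.1 x.2.2.2.2.1 x.2.2.2.2.2.1 x.2.2.2.2.2.2}

/-- Proposition 1 (myopic rule): the set of parameters is a nonempty open subset of ℝ⁷,
every tuple in it satisfies the strict inequality saying that improving the search
technology reduces the ex-ante probability of selecting a minority (A) candidate,
and the explicit tuple (0.9, 0.8, 0.7, 1.5, 1, 0.6, 2/3) belongs to the set. -/
theorem stmt_1 :
    Params1.Nonempty ∧ IsOpen Params1 ∧
    (∀ δ pA pB vA vB q μA : ℝ, GoodParams1 δ pA pB vA vB q μA →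
      pA * (1 - pB + pB * q) >
        pA * q * (1 + μA * (1 - pA * q) * (1 - pB) / (μA * pA * q + (1 - μA) * pB))) ∧
    ((0.9 : ℝ), (0.8 : ℝ), (0.7 : ℝ), (1.5 : ℝ), (1 : ℝ), (0.6 : ℝ), (2 / 3 : ℝ)) ∈ Params1 := by
  have hmem : ((0.9 : ℝ), (0.8 : ℝ), (0.7 : ℝ), (1.5 : ℝ), (1 : ℝ), (0.6 : ℝ), (2 / 3 : ℝ)) ∈ Params1 := by
    simp only [Params1, GoodParams1, Set.mem_setOf_eq]
    norm_num
  refine ⟨⟨_, hmem⟩, ?_, ?_, hmem⟩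
  · have hden : ∀ pA q : ℝ, pA < 1 → 0 < pA → 0 < q → q < 1 → 0 < (1 - q) * pA + 1 - pA := by
      intro pA q h1 h2 h3 h4
      nlinarith [mul_pos h2 (sub_pos.2 h4)]
    have heq : Params1 = {x : ℝ × ℝ × ℝ × ℝ × ℝ × ℝ × ℝ |
        0 < x.1 ∧ x.1 < 1 ∧ 0 < x.2.2.1 ∧ x.2.2.1 < x.2.1 ∧ x.2.1 < 1 ∧
        x.2.2.2.1 > x.2.2.2.2.1 ∧ x.2.2.2.2.1 > 0 ∧
        0 < x.2.2.2.2.2.1 ∧ x.2.2.2.2.2.1 < 1 ∧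
        1 / 2 < x.2.2.2.2.2.2 ∧ x.2.2.2.2.2.2 < 1 ∧
        x.2.1 * x.2.2.2.2.2.1 * x.2.2.2.1 > x.2.2.1 * x.2.2.2.2.1 ∧
        x.2.2.1 * x.2.2.2.2.1 > x.1 * (x.2.2.2.2.2.2 * x.2.1 * x.2.2.2.2.2.1 * x.2.2.2.1
          + (1 - x.2.2.2.2.2.2) * x.2.2.1 * x.2.2.2.2.1) ∧
        (1 - x.2.2.2.2.2.1) * x.2.1 * x.2.2.2.2.2.1 * x.2.2.2.1 <
          x.1 * (x.2.2.2.2.2.2 * x.2.1 * x.2.2.2.2.2.1 * x.2.2.2.1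
          + (1 - x.2.2.2.2.2.2) * x.2.2.1 * x.2.2.2.2.1) *
          ((1 - x.2.2.2.2.2.1) * x.2.1 + 1 - x.2.1) ∧
        (1 - x.2.2.2.2.2.2) * x.2.2.1 * (1 - x.2.2.2.2.2.1) >
          x.2.2.2.2.2.2 * (1 - x.2.1) * x.2.2.2.2.2.1} := by
      ext ⟨δ, pA, pB, vA, vB, q, μA⟩
      simp only [Params1, GoodParams1, Set.mem_setOf_eq]
      constructor
      · rintro ⟨a1, a2, a3, a4, a5, a6, a7, a8, a9, a10, a11, a12, a13, a14, a15⟩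
        exact ⟨a1, a2, a3, a4, a5, a6, a7, a8, a9, a10, a11, a12, a13,
          (div_lt_iff₀ (hden pA q a5 (a3.trans a4) a8 a9)).1 a14, a15⟩
      · rintro ⟨a1, a2, a3, a4, a5, a6, a7, a8, a9, a10, a11, a12, a13, a14, a15⟩
        exact ⟨a1, a2, a3, a4, a5, a6, a7, a8, a9, a10, a11, a12, a13,
          (div_lt_iff₀ (hden pA q a5 (a3.trans a4) a8 a9)).2 a14, a15⟩
    rw [heq]
    repeat' (first
      | exact isOpen_lt (by fun_prop) (by fun_prop)
      | refine IsOpen.and ?_ ?_)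
  · rintro δ pA pB vA vB q μA
      ⟨a1, a2, a3, a4, a5, a6, a7, a8, a9, a10, a11, a12, a13, a14, a15⟩
    have hA : 0 < pA := a3.trans a4
    have hD : 0 < μA * pA * q + (1 - μA) * pB := by
      have h1 : 0 < μA := by linarith
      have h2 : 0 < 1 - μA := by linarith
      positivity
    have hB : 0 < 1 - pB := by linarith
    have key : q * (μA * (1 - pA * q) * (1 - pB) / (μA * pA * q + (1 - μA) * pB)) <
        (1 - pB) * (1 - q) := by
      rw [← mul_div_assoc, div_lt_iff₀ hD]
      nlinarith [mul_pos hB (sub_pos.2 a15)]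
    have := mul_lt_mul_of_pos_left key hA
    nlinarith [this]
end

section
/- For (δ, p_A, p_B, v_A, v_B, q_A, q_B, μ_A, ζ) ∈ ℝ⁹, define λ_A = p_A·q_A, λ_B = p_B·q_B, λ_A0 = (1−q_A)·p_A·q_A/(1−q_A·p_A), λ_B0 = (1−q_B)·p_B·q_B/(1−q_B·p_B), μ_B = 1−μ_A, u_A0 = (1−q_A)·λ_A·v_A/(1−q_A·p_A), and u_B0 = (1−q_B)·λ_B·v_B/(1−q_B·p_B). The set of tuples satisfying all of the following strict inequalities is a nonempty open subset of ℝ⁹: 0 < δ < 1; 0 < p_B < p_A < 1; v_A > v_B > 0; 0 < q_A < q_B < 1; 0 < μ_A < 1; 0 < ζ < μ_B; (9) λ_B·v_B > λ_A·v_A > δ·(μ_A·λ_A·v_A + μ_B·λ_B·v_B) > u_A0 and δ·(μ_A·λ_A·v_A + μ_B·λ_B·v_B) > u_B0; (10) u_B0 > δ·((μ_A+ζ)·λ_A·v_A + (μ_B−ζ)·λ_B·v_B) > u_A0; (12) μ_A/(μ_A·λ_A + μ_B·λ_B) > (1−λ_B0)·(μ_A+ζ)/((μ_A+ζ)·λ_A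 + (μ_B−ζ)·(λ_B + λ_B0·(1−λ_B))). In particular, the tuple (0.9, 0.8, 0.64, 1.5, 1, 0.2, 0.75, 0.9, 0.04) belongs to this set. (This is the content of Proposition 2: under the myopic recruitment rule there exist parameters, with minority candidates more valuable and more likely qualified, for which shifting search probability ζ from non-minority to minority candidates strictly reduces the ex-ante probability of selecting a minority candidate.) -/
/-- The conditions of Proposition 2 (myopic rule): parameter restrictions plus
conditions (9), (10), and (12) from the proof. -/
def GoodParams2 (δ pA pB vA vB qA qB μA ζ : ℝ) : Prop :=
  let lA := pA * qA
  let lB := pB * qB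
  let lB0 := (1 - qB) * pB * qB / (1 - qB * pB)
  let μB := 1 - μA
  let uA0 := (1 - qA) * lA * vA / (1 - qA * pA)
  let uB0 := (1 - qB) * lB * vB / (1 - qB * pB)
  0 < δ ∧ δ < 1 ∧
  0 < pB ∧ pB < pA ∧ pA < 1 ∧
  vA > vB ∧ vB > 0 ∧
  0 < qA ∧ qA < qB ∧ qB < 1 ∧
  0 < μA ∧ μA < 1 ∧
  0 < ζ ∧ ζ < μB ∧
  -- (9): blank-slate candidates are myopically preferred to search, which is
  -- preferred to once-failed candidates
  lB * vB > lA * vA ∧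
  lA * vA > δ * (μA * lA * vA + μB * lB * vB) ∧
  δ * (μA * lA * vA + μB * lB * vB) > uA0 ∧
  δ * (μA * lA * vA + μB * lB * vB) > uB0 ∧
  -- (10): under the policy, search falls between a once-failed B-candidate and a
  -- once-failed A-candidate in myopic value
  uB0 > δ * ((μA + ζ) * lA * vA + (μB - ζ) * lB * vB) ∧
  δ * ((μA + ζ) * lA * vA + (μB - ζ) * lB * vB) > uA0 ∧
  -- (12): the ex-ante probability of selecting an A-candidate is strictly lower
  -- under the policy
  μA / (μA * lA + μB * lB) >
    (1 - lB0) * (μA + ζ) / ((μA + ζ) * lA + (μB - ζ) * (lB + lB0 * (1 - lB)))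

/-- The set of parameter tuples satisfying the conditions of Proposition 2. -/
def Params2 : Set (ℝ × ℝ × ℝ × ℝ × ℝ × ℝ × ℝ × ℝ × ℝ) :=
  {x | GoodParams2 x.1 x.2.1 x.2.2.1 x.2.2.2.1 x.2.2.2.2.1 x.2.2.2.2.2.1
    x.2.2.2.2.2.2.1 x.2.2.2.2.2.2.2.1 x.2.2.2.2.2.2.2.2}

/-- Proposition 2 (myopic rule): the set of parameters is a nonempty open subset of ℝ⁹,
and the explicit tuple (0.9, 0.8, 0.64, 1.5, 1, 0.2, 0.75, 0.9, 0.04) belongs to it. -/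
theorem stmt_5 :
    Params2.Nonempty ∧ IsOpen Params2 ∧
    ((0.9 : ℝ), (0.8 : ℝ), (0.64 : ℝ), (1.5 : ℝ), (1 : ℝ), (0.2 : ℝ), (0.75 : ℝ),
      (0.9 : ℝ), (0.04 : ℝ)) ∈ Params2 := by
  have hmem : ((0.9 : ℝ), (0.8 : ℝ), (0.64 : ℝ), (1.5 : ℝ), (1 : ℝ), (0.2 : ℝ), (0.75 : ℝ),
      (0.9 : ℝ), (0.04 : ℝ)) ∈ Params2 := by
    simp only [Params2, GoodParams2, Set.mem_setOf_eq]
    norm_num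
  refine ⟨⟨_, hmem⟩, ?_, hmem⟩
  rw [isOpen_iff_mem_nhds]
  intro x hx
  have hx' := hx
  simp only [Params2, GoodParams2, Set.mem_setOf_eq, gt_iff_lt] at hx'
  obtain ⟨h1, h2, h3, h4, h5, h6, h7, h8, h9, h10, h11, h12, h13, h14, h15, h16, h17, h18,
    h19, h20, h21⟩ := hx'
  have dA : 0 < 1 - x.2.2.2.2.2.1 * x.2.1 := by nlinarith
  have dB : 0 < 1 - x.2.2.2.2.2.2.1 * x.2.2.1 := by nlinarith
  have lA : 0 < x.2.1 * x.2.2.2.2.2.1 := mul_pos (by linarith) h8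
  have lB : 0 < x.2.2.1 * x.2.2.2.2.2.2.1 := mul_pos h3 (by linarith)
  have lB1 : 0 < 1 - x.2.2.1 * x.2.2.2.2.2.2.1 := by linarith
  have lB0 : 0 < (1 - x.2.2.2.2.2.2.1) * x.2.2.1 * x.2.2.2.2.2.2.1
      / (1 - x.2.2.2.2.2.2.1 * x.2.2.1) :=
    div_pos (mul_pos (mul_pos (by linarith) h3) (by linarith)) dB
  have d1 : x.2.2.2.2.2.2.2.1 * (x.2.1 * x.2.2.2.2.2.1)
      + (1 - x.2.2.2.2.2.2.2.1) * (x.2.2.1 * x.2.2.2.2.2.2.1) ≠ 0 :=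
    (add_pos (mul_pos h11 lA) (mul_pos (by linarith) lB)).ne'
  have d2 : (x.2.2.2.2.2.2.2.1 + x.2.2.2.2.2.2.2.2) * (x.2.1 * x.2.2.2.2.2.1)
      + (1 - x.2.2.2.2.2.2.2.1 - x.2.2.2.2.2.2.2.2) * (x.2.2.1 * x.2.2.2.2.2.2.1 +
        (1 - x.2.2.2.2.2.2.1) * x.2.2.1 * x.2.2.2.2.2.2.1
      / (1 - x.2.2.2.2.2.2.1 * x.2.2.1) * (1 - x.2.2.1 * x.2.2.2.2.2.2.1)) ≠ 0 :=
    (add_pos (mul_pos (by linarith) lA) (mul_pos (by linarith)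
      (add_pos lB (mul_pos lB0 lB1)))).ne'
  have dA' := dA.ne'
  have dB' := dB.ne'
  change ∀ᶠ y in nhds x, y ∈ Params2
  simp only [Params2, GoodParams2, Set.mem_setOf_eq, gt_iff_lt, Filter.eventually_and]
  refine ⟨?_, ?_, ?_, ?_, ?_, ?_, ?_, ?_, ?_, ?_, ?_, ?_, ?_, ?_, ?_, ?_, ?_, ?_, ?_, ?_, ?_⟩ <;>
    refine ContinuousAt.eventually_lt ?_ ?_ (by assumption) <;>
    fun_prop (disch := assumption)
end

section
/- For (δ, p_A, p_B, v_A, v_B, q, μ_A) ∈ ℝ⁷, define μ_B = 1−μ_A, λ_A = p_A·q, λ_A0 = q·(1−q)·p_A/((1−q)·p_A + 1 − p_A), V_A = λ_A·v_A/(1 − δ·(1−λ_A)), V_B = p_B·v_B/(1 − δ·(1−p_B)), V_A0 = λ_A0·v_A/(1 − δ·(1−λ_A0)), and V_S = δ·(μ_A·λ_A·v_A + μ_B·p_B·v_B)/(1 − δ² + δ²·(μ_A·λ_A + μ_B·p_B)). The set of tuples satisfying all of the following strict inequalities is a nonempty open subset of ℝ⁷: 0 < δ < 1; 0 < p_B <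 p_A < 1; v_A > v_B > 0; 0 < q < 1; 1/2 < μ_A < 1; (15) V_B > V_A; (16) V_A > V_S, V_B > V_S, and V_S > V_A0; (8) μ_B·p_B·(1−q) > μ_A·(1−p_A)·q; and moreover every tuple in this set satisfies (1−p_B)·p_A > (1−p_B)·λ_A·(μ_A + μ_B·p_B)/(μ_A·λ_A + μ_B·p_B). In particular, the tuple (0.9, 0.75, 0.7, 1.2, 1, 0.19, 0.52) belongs to this set. (This is the content of Proposition 3: under the optimal forward-looking index rule there exist parameters, with minority candidates more valuable, more likely qualified, and more likely found by search, for which improving the search technology strictly reduces the ex-ante probability of selecting a minority candidate.) -/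
/-- The conditions of Proposition 3 (optimal forward-looking rule): parameter
restrictions plus conditions (15), (16), and (8) from the proof. -/
def GoodParams3 (δ pA pB vA vB q μA : ℝ) : Prop :=
  let μB := 1 - μA
  let lA := pA * q
  let lA0 := q * (1 - q) * pA / ((1 - q) * pA + 1 - pA)
  let VA := lA * vA / (1 - δ * (1 - lA))
  let VB := pB * vB / (1 - δ * (1 - pB))
  let VA0 := lA0 * vA / (1 - δ * (1 - lA0))
  let VS := δ * (μA * lA * vA + μB * pB * vB) /
    (1 - δ ^ 2 + δ ^ 2 * (μA * lA + μB * pB))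
  0 < δ ∧ δ < 1 ∧
  0 < pB ∧ pB < pA ∧ pA < 1 ∧
  vA > vB ∧ vB > 0 ∧
  0 < q ∧ q < 1 ∧
  1 / 2 < μA ∧ μA < 1 ∧
  -- (15): the B-candidate is evaluated first
  VB > VA ∧
  -- (16): blank-slate candidates beat search, which beats a once-failed A-candidate
  VA > VS ∧ VB > VS ∧ VS > VA0 ∧
  -- (8): the ex-ante probability of selecting an A-candidate is lower with search
  μB * pB * (1 - q) > μA * (1 - pA) * q

/-- The set of parameter tuples satisfying the conditions of Proposition 3. -/
def Params3 : Set (ℝ × ℝ × ℝ × ℝ × ℝ × ℝ × ℝ) :=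
  {x | GoodParams3 x.1 x.2.1 x.2.2.1 x.2.2.2.1 x.2.2.2.2.1 x.2.2.2.2.2.1 x.2.2.2.2.2.2}

/-- Proposition 3 (optimal rule): the set of parameters is a nonempty open subset of ℝ⁷,
every tuple in it satisfies the strict inequality saying that improving the search
technology reduces the ex-ante probability of selecting a minority (A) candidate,
and the explicit tuple (0.9, 0.75, 0.7, 1.2, 1, 0.19, 0.52) belongs to the set. -/
theorem stmt_7 :
    Params3.Nonempty ∧ IsOpen Params3 ∧
    (∀ δ pA pB vA vB q μA : ℝ, GoodParams3 δ pA pB vA vB q μA →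
      (1 - pB) * pA >
        (1 - pB) * (pA * q) * (μA + (1 - μA) * pB) / (μA * (pA * q) + (1 - μA) * pB)) ∧
    ((0.9 : ℝ), (0.75 : ℝ), (0.7 : ℝ), (1.2 : ℝ), (1 : ℝ), (0.19 : ℝ), (0.52 : ℝ)) ∈
      Params3 := by
  have hmem : ((0.9 : ℝ), (0.75 : ℝ), (0.7 : ℝ), (1.2 : ℝ), (1 : ℝ), (0.19 : ℝ), (0.52 : ℝ)) ∈
      Params3 := by
    simp only [Params3, Set.mem_setOf_eq, GoodParams3]
    norm_num
  refine ⟨⟨_, hmem⟩, ?_, ?_, hmem⟩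
  · rw [isOpen_iff_mem_nhds]
    rintro ⟨δ, pA, pB, vA, vB, q, μA⟩ hx
    simp only [Params3, Set.mem_setOf_eq, GoodParams3] at hx
    obtain ⟨h1, h2, h3, h4, h5, h6, h7, h8, h9, h10, h11, h12, h13, h14, h15, h16⟩ := hx
    have hpA : 0 < pA := h3.trans h4
    have hl : 0 < pA * q := mul_pos hpA h8
    have d0 : 0 < (1 - q) * pA + 1 - pA := by
      have := mul_pos (sub_pos.2 h9) hpA
      linarith
    have hl0 : 0 < q * (1 - q) * pA / ((1 - q) * pA + 1 - pA) :=
      div_pos (mul_pos (mul_pos h8 (sub_pos.2 h9)) hpA) d0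
    have key : ∀ l : ℝ, 0 < l → 1 - δ * (1 - l) ≠ 0 := by
      intro l hl
      have := mul_pos h1 hl
      apply ne_of_gt
      nlinarith
    have dA := key _ hl
    have dB := key _ h3
    have dA0 := key _ hl0
    have dS : 1 - δ ^ 2 + δ ^ 2 * (μA * (pA * q) + (1 - μA) * pB) ≠ 0 := by
      have a : 0 < μA * (pA * q) + (1 - μA) * pB :=
        add_pos (mul_pos (by linarith) hl) (mul_pos (sub_pos.2 h11) h3)
      have b := mul_pos (pow_pos h1 2) a
      apply ne_of_gt
      nlinarith
    have d0' := d0.ne'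
    simp only [Params3, GoodParams3]
    refine Filter.Eventually.and ?_ <| Filter.Eventually.and ?_ <| Filter.Eventually.and ?_ <|
      Filter.Eventually.and ?_ <| Filter.Eventually.and ?_ <| Filter.Eventually.and ?_ <|
      Filter.Eventually.and ?_ <| Filter.Eventually.and ?_ <| Filter.Eventually.and ?_ <|
      Filter.Eventually.and ?_ <| Filter.Eventually.and ?_ <| Filter.Eventually.and ?_ <|
      Filter.Eventually.and ?_ <| Filter.Eventually.and ?_ <| Filter.Eventually.and ?_ ?_
    all_goals
      refine ContinuousAt.eventually_lt ?_ ?_ (by assumption)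
      all_goals fun_prop (disch := assumption)
  · intro δ pA pB vA vB q μA hx
    simp only [GoodParams3] at hx
    obtain ⟨h1, h2, h3, h4, h5, h6, h7, h8, h9, h10, h11, h12, h13, h14, h15, h16⟩ := hx
    have hpA : 0 < pA := h3.trans h4
    have a : 0 < μA * (pA * q) + (1 - μA) * pB :=
      add_pos (mul_pos (by linarith) (mul_pos hpA h8)) (mul_pos (sub_pos.2 h11) h3)
    rw [gt_iff_lt, div_lt_iff₀ a]
    have b := mul_pos (mul_pos (sub_pos.2 (h4.trans h5)) hpA) (sub_pos.2 h16)
    nlinarith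
end

section
/- For (δ, p_A, p_B, v_A, v_B, q_A, q_B, μ_A, ζ) ∈ ℝ⁹, define μ_B = 1−μ_A, λ_A = p_A·q_A, λ_B = p_B·q_B, p_A0 = (1−q_A)·p_A/(1−q_A·p_A), p_B0 = (1−q_B)·p_B/(1−q_B·p_B), λ_A0 = p_A0·q_A, λ_B0 = p_B0·q_B, p_B00 = (1−q_B)·p_B0/(1−q_B·p_B0), λ_B00 = p_B00·q_B, the index function V(λ, v) = λ·v/(1 − δ·(1−λ)), V_S0 = δ·(μ_A·λ_A·v_A + μ_B·λ_B·v_B)/(1 − δ² + δ²·(μ_A·λ_A + μ_B·λ_B)), and V_Sζ = (δ·(μ_A+ζ)·λ_A·v_A + δ·(μ_B−ζ)·v_B·(λ_B + δ·(1−λ_B)·λ_B0))/(1 − δ²·((μ_A+ζ)·(1−λ_A) + (μ_B−ζ)·(1−λ_B)·(1−λ_B0)·δ)). The set of tuples satisfying all of the following strict inequalities is a nonempty open subset of ℝ⁹: 0 < δ < 1; 0 < p_B < p_A < 1; v_A > v_B > 0; 0 < q_A < q_B < 1; 0 < μ_A < 1; 0 < ζ < μ_B; (18) V(λ_B, v_B)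 > V(λ_A, v_A); (19) V(λ_A, v_A) > V_S0, V(λ_B, v_B) > V_S0, V_S0 > V(λ_A0, v_A), and V_S0 > V(λ_B0, v_B); (21) V(λ_A, v_A) > V_Sζ, V(λ_B0, v_B) > V_Sζ, V_Sζ > V(λ_A0, v_A), and V_Sζ > V(λ_B00, v_B); (12) μ_A/(μ_A·λ_A + μ_B·λ_B) > (1−λ_B0)·(μ_A+ζ)/((μ_A+ζ)·λ_A + (μ_B−ζ)·(λ_B + λ_B0·(1−λ_B))). In particular, the tuple (0.9, 0.69, 0.68, 1.01, 1, 0.4, 0.8, 0.15, 0.01) belongs to this set. (This is the content of Proposition 4: under the optimal forward-looking index rule there exist parameters, with minority candidates more valuable and more likely qualified, for which shifting search probability ζ from non-minority to minority candidates strictly reduces the ex-ante probability of selecting a minority candidate.) -/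
/-- The Gittins index of a candidate with one-step success probability `l` and value `v`. -/
noncomputable def indexV (δ l v : ℝ) : ℝ := l * v / (1 - δ * (1 - l))

/-- The conditions of Proposition 4 (optimal forward-looking rule): parameter
restrictions plus conditions (18), (19), (21), and (12) from the proof. -/
def GoodParams4 (δ pA pB vA vB qA qB μA ζ : ℝ) : Prop :=
  let μB := 1 - μA
  let lA := pA * qA
  let lB := pB * qB
  let pA0 := (1 - qA) * pA / (1 - qA * pA)
  let pB0 := (1 - qB) * pB / (1 - qB * pB)
  let lA0 := pA0 * qA
  let lB0 := pB0 * qB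
  let pB00 := (1 - qB) * pB0 / (1 - qB * pB0)
  let lB00 := pB00 * qB
  let VS0 := δ * (μA * lA * vA + μB * lB * vB) /
    (1 - δ ^ 2 + δ ^ 2 * (μA * lA + μB * lB))
  let VSζ := (δ * (μA + ζ) * lA * vA + δ * (μB - ζ) * vB * (lB + δ * (1 - lB) * lB0)) /
    (1 - δ ^ 2 * ((μA + ζ) * (1 - lA) + (μB - ζ) * (1 - lB) * (1 - lB0) * δ))
  0 < δ ∧ δ < 1 ∧
  0 < pB ∧ pB < pA ∧ pA < 1 ∧
  vA > vB ∧ vB > 0 ∧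
  0 < qA ∧ qA < qB ∧ qB < 1 ∧
  0 < μA ∧ μA < 1 ∧
  0 < ζ ∧ ζ < μB ∧
  -- (18): the B-candidate is evaluated first
  indexV δ lB vB > indexV δ lA vA ∧
  -- (19): blank-slate candidates beat status-quo search, which beats once-failed candidates
  indexV δ lA vA > VS0 ∧ indexV δ lB vB > VS0 ∧
  VS0 > indexV δ lA0 vA ∧ VS0 > indexV δ lB0 vB ∧
  -- (21): under the policy, one failure suffices for an A-candidate's index, and two
  -- failures for a B-candidate's index, to drop below the search index
  indexV δ lA vA > VSζ ∧ indexV δ lB0 vB > VSζ ∧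
  VSζ > indexV δ lA0 vA ∧ VSζ > indexV δ lB00 vB ∧
  -- (12): the ex-ante probability of selecting an A-candidate is strictly lower
  -- under the policy
  μA / (μA * lA + μB * lB) >
    (1 - lB0) * (μA + ζ) / ((μA + ζ) * lA + (μB - ζ) * (lB + lB0 * (1 - lB)))

/-- The set of parameter tuples satisfying the conditions of Proposition 4. -/
def Params4 : Set (ℝ × ℝ × ℝ × ℝ × ℝ × ℝ × ℝ × ℝ × ℝ) :=
  {x | GoodParams4 x.1 x.2.1 x.2.2.1 x.2.2.2.1 x.2.2.2.2.1 x.2.2.2.2.2.1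
    x.2.2.2.2.2.2.1 x.2.2.2.2.2.2.2.1 x.2.2.2.2.2.2.2.2}

open Filter Topology in
lemma indexV_ca {X : Type*} [TopologicalSpace X] {x : X} {d l v : X → ℝ}
    (hd : ContinuousAt d x) (hl : ContinuousAt l x) (hv : ContinuousAt v x)
    (h0 : 0 < d x) (h1 : d x < 1) (hl0 : 0 < l x) (hl1 : l x < 1) :
    ContinuousAt (fun y => indexV (d y) (l y) (v y)) x := by
  unfold indexV
  refine ContinuousAt.div (by fun_prop) (by fun_prop) ?_
  nlinarith

lemma post_mem {p q : ℝ} (hp0 : 0 < p) (hp1 : p < 1) (hq0 : 0 < q) (hq1 : q < 1) :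
    0 < (1 - q) * p / (1 - q * p) ∧ (1 - q) * p / (1 - q * p) < 1 := by
  have h : 0 < 1 - q * p := by nlinarith
  refine ⟨div_pos (by nlinarith) h, ?_⟩
  rw [div_lt_one h]; nlinarith

lemma mul_mem01 {p q : ℝ} (hp0 : 0 < p) (hp1 : p < 1) (hq0 : 0 < q) (hq1 : q < 1) :
    0 < p * q ∧ p * q < 1 := ⟨by positivity, by nlinarith⟩

set_option maxHeartbeats 2000000 in
open Filter Topology in
lemma good_ev {X : Type*} [TopologicalSpace X] {x : X} {δ pA pB vA vB qA qB μA ζ : X → ℝ}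
    (cδ : ContinuousAt δ x) (cpA : ContinuousAt pA x) (cpB : ContinuousAt pB x)
    (cvA : ContinuousAt vA x) (cvB : ContinuousAt vB x) (cqA : ContinuousAt qA x)
    (cqB : ContinuousAt qB x) (cμ : ContinuousAt μA x) (cζ : ContinuousAt ζ x)
    (h : GoodParams4 (δ x) (pA x) (pB x) (vA x) (vB x) (qA x) (qB x) (μA x) (ζ x)) :
    ∀ᶠ y in 𝓝 x,
      GoodParams4 (δ y) (pA y) (pB y) (vA y) (vB y) (qA y) (qB y) (μA y) (ζ y) := by
  obtain ⟨a1, a2, a3, a4, a5, a6, a7, a8, a9, a10, a11, a12, a13, a14, b1, b2, b3, b4, b5,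
    b6, b7, b8, b9, b10⟩ := h
  have hpA0 : 0 < pA x := a3.trans a4
  have hpB1 : pB x < 1 := a4.trans a5
  have hqB0 : 0 < qB x := a8.trans a9
  have hqA1 : qA x < 1 := a9.trans a10
  obtain ⟨A0, A1⟩ := mul_mem01 hpA0 a5 a8 hqA1
  obtain ⟨B0, B1⟩ := mul_mem01 a3 hpB1 hqB0 a10
  obtain ⟨PA0, PA1⟩ := post_mem hpA0 a5 a8 hqA1
  obtain ⟨PB0, PB1⟩ := post_mem a3 hpB1 hqB0 a10
  obtain ⟨PC0, PC1⟩ := post_mem PB0 PB1 hqB0 a10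
  obtain ⟨LA0, LA1⟩ := mul_mem01 PA0 PA1 a8 hqA1
  obtain ⟨LB0, LB1⟩ := mul_mem01 PB0 PB1 hqB0 a10
  obtain ⟨LC0, LC1⟩ := mul_mem01 PC0 PC1 hqB0 a10
  have clA : ContinuousAt (fun y => pA y * qA y) x := by fun_prop
  have clB : ContinuousAt (fun y => pB y * qB y) x := by fun_prop
  have cPA : ContinuousAt (fun y => (1 - qA y) * pA y / (1 - qA y * pA y)) x :=
    ContinuousAt.div (by fun_prop) (by fun_prop) (by nlinarith)
  have cPB : ContinuousAt (fun y => (1 - qB y) * pB y / (1 - qB y * pB y)) x :=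
    ContinuousAt.div (by fun_prop) (by fun_prop) (by nlinarith)
  have cPC : ContinuousAt (fun y => (1 - qB y) * ((1 - qB y) * pB y / (1 - qB y * pB y)) /
      (1 - qB y * ((1 - qB y) * pB y / (1 - qB y * pB y)))) x :=
    ContinuousAt.div (by fun_prop) (by fun_prop) (by nlinarith)
  have cLA := cPA.mul cqA
  have cLB := cPB.mul cqB
  have cLC := cPC.mul cqB
  have iA := indexV_ca cδ clA cvA a1 a2 A0 A1
  have iB := indexV_ca cδ clB cvB a1 a2 B0 B1
  have iA0 := indexV_ca cδ cLA cvA a1 a2 LA0 LA1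
  have iB0 := indexV_ca cδ cLB cvB a1 a2 LB0 LB1
  have iC0 := indexV_ca cδ cLC cvB a1 a2 LC0 LC1
  have hd2 : δ x ^ 2 < 1 := by nlinarith
  have hd20 : 0 < δ x ^ 2 := by positivity
  have hm : 0 < 1 - μA x := by linarith
  have hmz : 0 < 1 - μA x - ζ x := by linarith
  have hS : 0 < μA x * (pA x * qA x) + (1 - μA x) * (pB x * qB x) := by positivity
  have cV0 : ContinuousAt (fun y => δ y * (μA y * (pA y * qA y) * vA y +
      (1 - μA y) * (pB y * qB y) * vB y) /
      (1 - δ y ^ 2 + δ y ^ 2 * (μA y * (pA y * qA y) + (1 - μA y) * (pB y * qB y)))) x := by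
    refine ContinuousAt.div (by fun_prop) (by fun_prop) ?_
    have := mul_pos hd20 hS
    apply ne_of_gt
    linarith
  have cL12 : ContinuousAt (fun y => μA y / (μA y * (pA y * qA y) +
      (1 - μA y) * (pB y * qB y))) x :=
    ContinuousAt.div (by fun_prop) (by fun_prop) hS.ne'
  have cVz : ContinuousAt (fun y => (δ y * (μA y + ζ y) * (pA y * qA y) * vA y +
      δ y * (1 - μA y - ζ y) * vB y * (pB y * qB y + δ y * (1 - pB y * qB y) *
        ((1 - qB y) * pB y / (1 - qB y * pB y) * qB y))) /
      (1 - δ y ^ 2 * ((μA y + ζ y) * (1 - pA y * qA y) + (1 - μA y - ζ y) * (1 - pB y * qB y) *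
        (1 - (1 - qB y) * pB y / (1 - qB y * pB y) * qB y) * δ y))) x := by
    refine ContinuousAt.div (by fun_prop) (by fun_prop) ?_
    have e1 : (μA x + ζ x) * (1 - pA x * qA x) ≤ μA x + ζ x :=
      mul_le_of_le_one_right (by linarith) (by linarith)
    have e2 : (1 - μA x - ζ x) * (1 - pB x * qB x) *
        (1 - (1 - qB x) * pB x / (1 - qB x * pB x) * qB x) * δ x ≤ 1 - μA x - ζ x := by
      have f1 : (1 - μA x - ζ x) * (1 - pB x * qB x) ≤ 1 - μA x - ζ x :=
        mul_le_of_le_one_right hmz.le (by linarith)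
      have f0 : 0 ≤ (1 - μA x - ζ x) * (1 - pB x * qB x) :=
        mul_nonneg hmz.le (by linarith)
      have g0 := mul_nonneg f0 (sub_nonneg.2 LB1.le)
      have g1 := mul_le_of_le_one_right f0 (sub_le_self 1 LB0.le)
      exact (mul_le_of_le_one_right g0 a2.le).trans (g1.trans f1)
    have e3 := mul_le_mul_of_nonneg_left (add_le_add e1 e2) hd20.le
    have e4 : (μA x + ζ x) + (1 - μA x - ζ x) = 1 := by ring
    rw [e4, mul_one] at e3
    exact (sub_pos.2 (e3.trans_lt hd2)).ne'
  have cR12 : ContinuousAt (fun y => (1 - (1 - qB y) * pB y / (1 - qB y * pB y) * qB y) *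
      (μA y + ζ y) / ((μA y + ζ y) * (pA y * qA y) + (1 - μA y - ζ y) * (pB y * qB y +
        (1 - qB y) * pB y / (1 - qB y * pB y) * qB y * (1 - pB y * qB y)))) x := by
    refine ContinuousAt.div (by fun_prop) (by fun_prop) ?_
    have e1 := mul_pos (add_pos a11 a13) A0
    have e2 := mul_pos hmz (add_pos B0 (mul_pos LB0 (sub_pos.2 B1)))
    exact (add_pos e1 e2).ne'
  have c0 : ∀ c : ℝ, ContinuousAt (fun _ : X => c) x := fun c => continuousAt_const
  have cμB : ContinuousAt (fun y => 1 - μA y) x := by fun_prop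
  filter_upwards [(c0 0).eventually_lt cδ a1, cδ.eventually_lt (c0 1) a2,
    (c0 0).eventually_lt cpB a3, cpB.eventually_lt cpA a4, cpA.eventually_lt (c0 1) a5,
    cvB.eventually_lt cvA a6, (c0 0).eventually_lt cvB a7, (c0 0).eventually_lt cqA a8,
    cqA.eventually_lt cqB a9, cqB.eventually_lt (c0 1) a10, (c0 0).eventually_lt cμ a11,
    cμ.eventually_lt (c0 1) a12, (c0 0).eventually_lt cζ a13, cζ.eventually_lt cμB a14,
    iA.eventually_lt iB b1, cV0.eventually_lt iA b2, cV0.eventually_lt iB b3,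
    iA0.eventually_lt cV0 b4, iB0.eventually_lt cV0 b5, cVz.eventually_lt iA b6,
    cVz.eventually_lt iB0 b7, iA0.eventually_lt cVz b8, iC0.eventually_lt cVz b9,
    cR12.eventually_lt cL12 b10] with y k1 k2 k3 k4 k5 k6 k7 k8 k9 k10 k11 k12 k13 k14 k15 k16
      k17 k18 k19 k20 k21 k22 k23 k24
  exact ⟨k1, k2, k3, k4, k5, k6, k7, k8, k9, k10, k11, k12, k13, k14, k15, k16, k17, k18, k19,
    k20, k21, k22, k23, k24⟩

lemma mem4 : ((0.9 : ℝ), (0.69 : ℝ), (0.68 : ℝ), (1.01 : ℝ), (1 : ℝ), (0.4 : ℝ), (0.8 : ℝ),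
      (0.15 : ℝ), (0.01 : ℝ)) ∈ Params4 := by
  simp only [Params4, GoodParams4, indexV, Set.mem_ofPred_eq]
  norm_num

/-- Proposition 4 (optimal rule): the set of parameters is a nonempty open subset of ℝ⁹,
and the explicit tuple (0.9, 0.69, 0.68, 1.01, 1, 0.4, 0.8, 0.15, 0.01) belongs to it. -/
theorem stmt_8 :
    Params4.Nonempty ∧ IsOpen Params4 ∧
    ((0.9 : ℝ), (0.69 : ℝ), (0.68 : ℝ), (1.01 : ℝ), (1 : ℝ), (0.4 : ℝ), (0.8 : ℝ),
      (0.15 : ℝ), (0.01 : ℝ)) ∈ Params4 := by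
  refine ⟨⟨_, mem4⟩, ?_, mem4⟩
  rw [isOpen_iff_mem_nhds]
  intro x hx
  exact good_ev (X := ℝ × ℝ × ℝ × ℝ × ℝ × ℝ × ℝ × ℝ × ℝ) (x := x)
    (δ := fun x => x.1) (pA := fun x => x.2.1) (pB := fun x => x.2.2.1)
    (vA := fun x => x.2.2.2.1) (vB := fun x => x.2.2.2.2.1) (qA := fun x => x.2.2.2.2.2.1)
    (qB := fun x => x.2.2.2.2.2.2.1) (μA := fun x => x.2.2.2.2.2.2.2.1)
    (ζ := fun x => x.2.2.2.2.2.2.2.2)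
    (by fun_prop) (by fun_prop) (by fun_prop) (by fun_prop) (by fun_prop) (by fun_prop)
    (by fun_prop) (by fun_prop) (by fun_prop) hx
end
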